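/- Let r≤s be positive integers. If the admissible 6-tuple f is a trap of type (r,s), then σ(f) is also a trap of type (r,s). -/

import Mathlib

/-!
Common setup: 6-tuples, the coloured graph Γ(f), conditions (I)–(VI),
the maps ψ₁, ψ₂, ψ₃, σ, equivalences, traps, canonical/minimal/root tuples.
-/

namespace GMN

/-- A 6-tuple `(h₀,h₁,h₂;q₀,q₁,q₂)` of integers. -/
structure Tuple where
  h0 : ℤ
  h1 : ℤ
  h2 : ℤ
  q0 : ℤ
  q1 : ℤ
  q2 : ℤ

namespace Tuple

/-- The `h`-components indexed by `ℤ₃`. -/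
def h (f : Tuple) : ZMod 3 → ℤ := fun i => if i = 0 then f.h0 else if i = 1 then f.h1 else f.h2

/-- The `q`-components indexed by `ℤ₃`. -/
def q (f : Tuple) : ZMod 3 → ℤ := fun i => if i = 0 then f.q0 else if i = 1 then f.q1 else f.q2

/-- `2lᵢ = h_{i-1} + hᵢ`. -/
def twol (f : Tuple) (i : ZMod 3) : ℤ := f.h (i - 1) + f.h i

end Tuple

/-- Condition (I): all `hᵢ` positive. -/
def CondI (f : Tuple) : Prop := ∀ i, 0 < f.h i

/-- Condition (II): all `hᵢ` of the same parity. -/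
def CondII (f : Tuple) : Prop := ∀ i j, f.h i % 2 = f.h j % 2

/-- Condition (III): `0 ≤ qᵢ < 2lᵢ`. -/
def CondIII (f : Tuple) : Prop := ∀ i, 0 ≤ f.q i ∧ f.q i < f.twol i

/-- Condition (IV): all `qᵢ` of the same parity. -/
def CondIV (f : Tuple) : Prop := ∀ i j, f.q i % 2 = f.q j % 2

/-- Conditions (I)–(IV) together. -/
def CondsI_IV (f : Tuple) : Prop := CondI f ∧ CondII f ∧ CondIII f ∧ CondIV f

/-- Condition (V): `hᵢ + qᵢ` odd. -/
def CondV (f : Tuple) : Prop := ∀ i, (f.h i + f.q i) % 2 = 1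

/-- The vertex set `V(f) = ⋃ᵢ {i} × ℤ_{2lᵢ}`, with second coordinates as least
nonnegative residues. -/
def Vtx (f : Tuple) : Set (ZMod 3 × ℤ) := {p | 0 ≤ p.2 ∧ p.2 < f.twol p.1}

/-- `ι₀(i,j) = (i, j + (−1)^j)`, second coordinate mod `2lᵢ`. -/
def iota0 (f : Tuple) (p : ZMod 3 × ℤ) : ZMod 3 × ℤ :=
  (p.1, (if p.2 % 2 = 0 then p.2 + 1 else p.2 - 1) % f.twol p.1)

/-- `ι₁(i,j) = (i, j − (−1)^j)`, second coordinate mod `2lᵢ`. -/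
def iota1 (f : Tuple) (p : ZMod 3 × ℤ) : ZMod 3 × ℤ :=
  (p.1, (if p.2 % 2 = 0 then p.2 - 1 else p.2 + 1) % f.twol p.1)

/-- `ι₂(i,j) = (i+1, −j−1)` if `0 ≤ j ≤ hᵢ−1`, and `(i−1, 2lᵢ−j−1)` if `hᵢ ≤ j ≤ 2lᵢ−1`. -/
def iota2 (f : Tuple) (p : ZMod 3 × ℤ) : ZMod 3 × ℤ :=
  if p.2 < f.h p.1 then (p.1 + 1, (-p.2 - 1) % f.twol (p.1 + 1))
  else (p.1 - 1, (f.twol p.1 - p.2 - 1) % f.twol (p.1 - 1))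

/-- `ρ(i,j) = (i, j + qᵢ)`. -/
def rho (f : Tuple) (p : ZMod 3 × ℤ) : ZMod 3 × ℤ :=
  (p.1, (p.2 + f.q p.1) % f.twol p.1)

/-- `ρ⁻¹(i,j) = (i, j − qᵢ)`. -/
def rhoInv (f : Tuple) (p : ZMod 3 × ℤ) : ZMod 3 × ℤ :=
  (p.1, (p.2 - f.q p.1) % f.twol p.1)

/-- `ι₃ = ρ ∘ ι₂ ∘ ρ⁻¹`. -/
def iota3 (f : Tuple) : ZMod 3 × ℤ → ZMod 3 × ℤ :=
  rho f ∘ iota2 f ∘ rhoInv f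

/-- The four involutions of `Γ(f)`, indexed by the colour `c ∈ {0,1,2,3}`. -/
def iota (f : Tuple) : Fin 4 → ZMod 3 × ℤ → ZMod 3 × ℤ
  | 0 => iota0 f
  | 1 => iota1 f
  | 2 => iota2 f
  | 3 => iota3 f

/-- One step along an edge of `Γ(f)` whose colour lies in `S`, within `V(f)`. -/
def Step (f : Tuple) (S : Set (Fin 4)) (a b : ZMod 3 × ℤ) : Prop :=
  a ∈ Vtx f ∧ b ∈ Vtx f ∧ ∃ c ∈ S, b = iota f c a

/-- The orbit relation on `V(f)` of the subgroup generated by the involutions with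
colours in `S` (the `S`-residue relation). -/
def OrbRel (f : Tuple) (S : Set (Fin 4)) : ZMod 3 × ℤ → ZMod 3 × ℤ → Prop :=
  Relation.EqvGen (Step f S)

/-- The subgroup generated by the colours in `S` has exactly three orbits on `V(f)`. -/
def ThreeOrbits (f : Tuple) (S : Set (Fin 4)) : Prop :=
  ∃ a b c, a ∈ Vtx f ∧ b ∈ Vtx f ∧ c ∈ Vtx f ∧
    ¬ OrbRel f S a b ∧ ¬ OrbRel f S a c ∧ ¬ OrbRel f S b c ∧
    ∀ v ∈ Vtx f, OrbRel f S a v ∨ OrbRel f S b v ∨ OrbRel f S c v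

/-- Admissibility: conditions (I)–(IV), (V), and (VI) (three `{2,3}`-residues). -/
def Admissible (f : Tuple) : Prop :=
  CondsI_IV f ∧ CondV f ∧ ThreeOrbits f {2, 3}

/-- `ψ₁(h₀,h₁,h₂;q₀,q₁,q₂) = (h₁,h₂,h₀;q₁,q₂,q₀)`. -/
def psi1 (f : Tuple) : Tuple := ⟨f.h1, f.h2, f.h0, f.q1, f.q2, f.q0⟩

/-- `ψ₂(h₀,h₁,h₂;q₀,q₁,q₂) = (h₂,h₁,h₀;q₀,q₂,q₁)`. -/
def psi2 (f : Tuple) : Tuple := ⟨f.h2, f.h1, f.h0, f.q0, f.q2, f.q1⟩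

/-- `ψ₃(h₀,h₁,h₂;q₀,q₁,q₂) = (h₀,h₁,h₂;−q₀,−q₁,−q₂)`, the `q`-entries reduced to their
least nonnegative residues mod the respective `2lᵢ`. -/
def psi3 (f : Tuple) : Tuple :=
  ⟨f.h0, f.h1, f.h2,
    (-f.q0) % (f.h2 + f.h0), (-f.q1) % (f.h0 + f.h1), (-f.q2) % (f.h1 + f.h2)⟩

/-- The 2-symmetric transformation `σ`, with the `q′`-entries reduced to their least
nonnegative residues mod the respective `2lᵢ′ = h′_{i−1} + h′ᵢ`. -/
def sigma (f : Tuple) : Tuple :=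
  if f.q0 = 0 then f
  else if f.q0 < f.h0 ∧ f.q0 < f.h2 then
    ⟨f.h0 + f.h1 - f.q0, f.q0, f.h2 + f.h1 - f.q0,
      (f.h0 + f.h1 + f.h2 - 2 * f.q0) % ((f.h2 + f.h1 - f.q0) + (f.h0 + f.h1 - f.q0)),
      (f.q0 + f.q1 + f.h1) % ((f.h0 + f.h1 - f.q0) + f.q0),
      (f.q0 + f.q2 + f.h1) % (f.q0 + (f.h2 + f.h1 - f.q0))⟩
  else if f.h0 < f.q0 ∧ f.h2 < f.q0 then
    ⟨f.q0 + f.h1 - f.h2, f.h0 + f.h2 - f.q0, f.q0 + f.h1 - f.h0,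
      f.h1 % ((f.q0 + f.h1 - f.h0) + (f.q0 + f.h1 - f.h2)),
      (f.q0 + f.q1 - f.h2) % ((f.q0 + f.h1 - f.h2) + (f.h0 + f.h2 - f.q0)),
      (f.q0 + f.q2 - f.h0) % ((f.h0 + f.h2 - f.q0) + (f.q0 + f.h1 - f.h0))⟩
  else if f.q0 < f.h2 then
    ⟨f.h1, f.h0, f.h1 + f.h2 - f.h0,
      (f.h1 + f.h2 - f.q0) % ((f.h1 + f.h2 - f.h0) + f.h1),
      f.q1 % (f.h1 + f.h0),
      (2 * f.q0 + f.q2 + f.h1 - f.h0) % (f.h0 + (f.h1 + f.h2 - f.h0))⟩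
  else
    ⟨f.h1 + f.h0 - f.h2, f.h2, f.h1,
      (f.h1 + f.h0 - f.q0) % (f.h1 + (f.h1 + f.h0 - f.h2)),
      (2 * f.q0 + f.q1 + f.h1 - f.h2) % ((f.h1 + f.h0 - f.h2) + f.h2),
      f.q2 % (f.h2 + f.h1)⟩

/-- The complexity `ν(f) = h₀ + h₁ + h₂`. -/
def nu (f : Tuple) : ℤ := f.h0 + f.h1 + f.h2

/-- `δ(f) = ν(σ(f)) − ν(f)`. -/
def delta (f : Tuple) : ℤ := nu (sigma f) - nu f

/-- One step of the action of a generator of `H` on admissible 6-tuples. -/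
def HStep (a b : Tuple) : Prop :=
  Admissible a ∧ Admissible b ∧ (b = psi1 a ∨ b = psi2 a ∨ b = psi3 a)

/-- `H`-equivalence: the orbit relation of `H = ⟨ψ₁,ψ₂,ψ₃⟩` on `ℱ`. -/
def HEquiv : Tuple → Tuple → Prop := Relation.EqvGen HStep

/-- One step of the action of a generator of `H′` on admissible 6-tuples. -/
def H'Step (a b : Tuple) : Prop :=
  Admissible a ∧ Admissible b ∧ (b = psi2 a ∨ b = psi3 a)

/-- `H′`-equivalence: the orbit relation of `H′ = ⟨ψ₂,ψ₃⟩` on `ℱ`. -/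
def H'Equiv : Tuple → Tuple → Prop := Relation.EqvGen H'Step

/-- One step of the action of a generator of `G` on admissible 6-tuples. -/
def GStep (a b : Tuple) : Prop :=
  Admissible a ∧ Admissible b ∧ (b = psi1 a ∨ b = psi2 a ∨ b = psi3 a ∨ b = sigma a)

/-- `G`-equivalence: the orbit relation of `G = ⟨ψ₁,ψ₂,ψ₃,σ⟩` on `ℱ`. -/
def GEquiv : Tuple → Tuple → Prop := Relation.EqvGen GStep

/-- Membership in the set `{0, r+1, r+2, …, s−1}`. -/
def inT (r s x : ℤ) : Prop := x = 0 ∨ (r < x ∧ x < s)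

/-- A trap of type `(r,s)`: `H`-equivalent to an admissible `(r,r,s;q₀,0,q₂)` with
`q₀+k(q₀+q₂), q₂+k(q₀+q₂) ∈ {0,r+1,…,s−1} (mod r+s)` for all `k ≥ 0`. -/
def IsTrapOfType (r s : ℤ) (f : Tuple) : Prop :=
  ∃ g : Tuple, Admissible g ∧ HEquiv f g ∧
    g.h0 = r ∧ g.h1 = r ∧ g.h2 = s ∧ g.q1 = 0 ∧
    ∀ k : ℕ, inT r s ((g.q0 + (k : ℤ) * (g.q0 + g.q2)) % (r + s)) ∧
             inT r s ((g.q2 + (k : ℤ) * (g.q0 + g.q2)) % (r + s))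

/-- A trap: a trap of some type `(r,s)` with `0 < r ≤ s`. -/
def IsTrap (f : Tuple) : Prop := ∃ r s : ℤ, 0 < r ∧ r ≤ s ∧ IsTrapOfType r s f

/-- The canonical representative conditions (a)–(i) (together with admissibility). -/
def Canonical (f : Tuple) : Prop :=
  Admissible f ∧
  (f.h0 ≤ f.h1 ∧ f.h1 ≤ f.h2) ∧
  (2 * f.q0 ≤ f.h2 + f.h0) ∧
  ((f.q0 = 0 ∨ 2 * f.q0 = f.h2 + f.h0) → 2 * f.q1 ≤ f.h0 + f.h1) ∧
  ((f.q0 = 0 ∨ 2 * f.q0 = f.h2 + f.h0) → (f.q1 = 0 ∨ 2 * f.q1 = f.h0 + f.h1) →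
    2 * f.q2 ≤ f.h1 + f.h2) ∧
  (f.h0 = f.h1 → f.q0 ≤ f.q2 ∧ f.q2 ≤ (-f.q0) % (f.h2 + f.h0)) ∧
  (f.h0 = f.h1 → (f.q2 = f.q0 ∨ f.q2 = (-f.q0) % (f.h2 + f.h0)) → f.q1 ≤ f.h1) ∧
  (f.h1 = f.h2 → f.q0 ≤ f.q1 ∧ f.q1 ≤ (-f.q0) % (f.h2 + f.h0)) ∧
  (f.h1 = f.h2 → (f.q1 = f.q0 ∨ f.q1 = (-f.q0) % (f.h2 + f.h0)) → f.q2 ≤ f.h2) ∧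
  (f.h0 = f.h1 ∧ f.h1 = f.h2 → f.q1 ≤ f.q2)

/-- A canonical 6-tuple is minimal if its complexity is minimal in its `G`-orbit. -/
def Minimal (f : Tuple) : Prop :=
  Canonical f ∧ ∀ g, GEquiv f g → nu f ≤ nu g

/-- A canonical 6-tuple is a root if every `G`-equivalent but not `H`-equivalent
6-tuple has strictly larger complexity. -/
def Root (f : Tuple) : Prop :=
  Canonical f ∧ ∀ g, GEquiv f g → ¬ HEquiv f g → nu f < nu g

/-- A colour-preserving isomorphism between `Γ(f)` and `Γ(f′)`. -/
def CPIso (f f' : Tuple) : Prop :=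
  ∃ φ : ZMod 3 × ℤ → ZMod 3 × ℤ, Set.BijOn φ (Vtx f) (Vtx f') ∧
    ∀ c : Fin 4, ∀ v ∈ Vtx f, φ (iota f c v) = iota f' c (φ v)

/-- The set of admissible 6-tuples, as a type. -/
abbrev AdmTuple := {f : Tuple // Admissible f}


theorem zmod_three_cases (i : ZMod 3) : i = 0 ∨ i = 1 ∨ i = 2 := by
  revert i; decide

theorem iota2_zero (f : Tuple) (j : ℤ) : iota2 f (0, j) =
    if j < f.h0 then (1, (-j - 1) % (f.h0 + f.h1))
    else (2, (f.h2 + f.h0 - j - 1) % (f.h1 + f.h2)) := rfl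

theorem iota2_one (f : Tuple) (j : ℤ) : iota2 f (1, j) =
    if j < f.h1 then (2, (-j - 1) % (f.h1 + f.h2))
    else (0, (f.h0 + f.h1 - j - 1) % (f.h2 + f.h0)) := rfl

theorem iota2_two (f : Tuple) (j : ℤ) : iota2 f (2, j) =
    if j < f.h2 then (0, (-j - 1) % (f.h2 + f.h0))
    else (1, (f.h1 + f.h2 - j - 1) % (f.h0 + f.h1)) := rfl

theorem rho_zero (f : Tuple) (j : ℤ) : rho f (0, j) = (0, (j + f.q0) % (f.h2 + f.h0)) := rfl

theorem rho_one (f : Tuple) (j : ℤ) : rho f (1, j) = (1, (j + f.q1) % (f.h0 + f.h1)) := rfl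

theorem rho_two (f : Tuple) (j : ℤ) : rho f (2, j) = (2, (j + f.q2) % (f.h1 + f.h2)) := rfl

theorem twol_pos {f : Tuple} (h : CondI f) (i : ZMod 3) : 0 < f.twol i :=
  add_pos (h _) (h _)

theorem emod_mem_vtx {f : Tuple} (h : CondI f) (i : ZMod 3) (x : ℤ) :
    (i, x % f.twol i) ∈ Vtx f :=
  ⟨Int.emod_nonneg _ (twol_pos h i).ne', Int.emod_lt_of_pos _ (twol_pos h i)⟩

theorem iota2_mem_vtx {f : Tuple} (h : CondI f) (p : ZMod 3 × ℤ) : iota2 f p ∈ Vtx f := by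
  unfold iota2
  split_ifs
  · exact emod_mem_vtx h _ _
  · exact emod_mem_vtx h _ _

theorem rho_mem_vtx {f : Tuple} (h : CondI f) (p : ZMod 3 × ℤ) : rho f p ∈ Vtx f :=
  emod_mem_vtx h _ _

theorem rhoInv_mem_vtx {f : Tuple} (h : CondI f) (p : ZMod 3 × ℤ) : rhoInv f p ∈ Vtx f :=
  emod_mem_vtx h _ _

theorem rho_rhoInv {f : Tuple} {p : ZMod 3 × ℤ} (hp : p ∈ Vtx f) : rho f (rhoInv f p) = p := by
  obtain ⟨i, j⟩ := p
  simp only [rho, rhoInv, Int.emod_add_emod, sub_add_cancel]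
  rw [Int.emod_eq_of_lt hp.1 hp.2]

theorem rhoInv_rho {f : Tuple} {p : ZMod 3 × ℤ} (hp : p ∈ Vtx f) : rhoInv f (rho f p) = p := by
  obtain ⟨i, j⟩ := p
  simp only [rho, rhoInv, Int.emod_sub_emod, add_sub_cancel_right]
  rw [Int.emod_eq_of_lt hp.1 hp.2]

theorem orbRel_iota2 {f : Tuple} (h : CondI f) {v : ZMod 3 × ℤ} (hv : v ∈ Vtx f) :
    OrbRel f {2, 3} v (iota2 f v) :=
  .rel _ _ ⟨hv, iota2_mem_vtx h v, 2, by simp, rfl⟩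

theorem orbRel_rho_iota2 {f : Tuple} (h : CondI f) {v : ZMod 3 × ℤ} (hv : v ∈ Vtx f) :
    OrbRel f {2, 3} (rho f v) (rho f (iota2 f v)) := by
  refine .rel _ _ ⟨rho_mem_vtx h v, rho_mem_vtx h _, 3, by simp, ?_⟩
  change _ = rho f (iota2 f (rhoInv f (rho f v)))
  rw [rhoInv_rho hv]

/-- A map respecting the generating edges respects the orbit relation. -/
theorem orbRel_map {f f' : Tuple} (h : CondI f) (F : ZMod 3 × ℤ → ZMod 3 × ℤ)
    (h₂ : ∀ v ∈ Vtx f, OrbRel f' {2, 3} (F v) (F (iota2 f v)))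
    (h₃ : ∀ v ∈ Vtx f, OrbRel f' {2, 3} (F (rho f v)) (F (rho f (iota2 f v))))
    {v w : ZMod 3 × ℤ} (hvw : OrbRel f {2, 3} v w) : OrbRel f' {2, 3} (F v) (F w) := by
  induction hvw with
  | rel x y hxy =>
    obtain ⟨hx, -, c, hc, rfl⟩ := hxy
    rcases hc with rfl | hc
    · exact h₂ x hx
    · obtain rfl : c = 3 := hc
      have := h₃ _ (rhoInv_mem_vtx h x)
      rwa [rho_rhoInv hx] at this
  | refl x => exact .refl _
  | symm x y _ ih => exact ih.symm
  | trans x y z _ _ ih₁ ih₂ => exact ih₁.trans _ _ _ ih₂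

/-- Mutually inverse maps, up to the orbit relations, transfer the three-orbit condition. -/
theorem threeOrbits_transfer {f f' : Tuple} (F G : ZMod 3 × ℤ → ZMod 3 × ℤ)
    (hF : ∀ v w, OrbRel f {2, 3} v w → OrbRel f' {2, 3} (F v) (F w))
    (hG : ∀ v w, OrbRel f' {2, 3} v w → OrbRel f {2, 3} (G v) (G w))
    (hFV : ∀ v ∈ Vtx f, F v ∈ Vtx f') (hGV : ∀ v ∈ Vtx f', G v ∈ Vtx f)
    (hGF : ∀ v ∈ Vtx f, OrbRel f {2, 3} v (G (F v)))
    (hFG : ∀ v ∈ Vtx f', OrbRel f' {2, 3} v (F (G v)))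
    (h : ThreeOrbits f {2, 3}) : ThreeOrbits f' {2, 3} := by
  obtain ⟨a, b, c, ha, hb, hc, hab, hac, hbc, hall⟩ := h
  have key : ∀ x ∈ Vtx f, ∀ y ∈ Vtx f, OrbRel f' {2, 3} (F x) (F y) → OrbRel f {2, 3} x y :=
    fun x hx y hy hxy => (hGF x hx).trans _ _ _ ((hG _ _ hxy).trans _ _ _ (hGF y hy).symm)
  refine ⟨F a, F b, F c, hFV a ha, hFV b hb, hFV c hc, fun h => hab (key a ha b hb h),
    fun h => hac (key a ha c hc h), fun h => hbc (key b hb c hc h), fun v hv => ?_⟩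
  have back := (hFG v hv).symm
  exact (hall _ (hGV v hv)).imp (fun h => (hF _ _ h).trans _ _ _ back)
    (Or.imp (fun h => (hF _ _ h).trans _ _ _ back) fun h => (hF _ _ h).trans _ _ _ back)

theorem condI_psi2 {f : Tuple} (h : CondI f) : CondI (psi2 f) := by
  intro i
  obtain rfl | rfl | rfl := zmod_three_cases i
  · exact h 2
  · exact h 1
  · exact h 0

/-- The bijection `(i, j) ↦ (−i, j − hᵢ)` from `V(f)` to `V(ψ₂ f)`. -/
def flip (f : Tuple) (p : ZMod 3 × ℤ) : ZMod 3 × ℤ := (-p.1, (p.2 - f.h p.1) % f.twol p.1)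

theorem twol_psi2 (f : Tuple) (i : ZMod 3) : (psi2 f).twol (-i) = f.twol i := by
  obtain rfl | rfl | rfl := zmod_three_cases i <;> exact add_comm _ _

theorem h_psi2 (f : Tuple) (i : ZMod 3) : (psi2 f).h (-i) = f.h (i - 1) := by
  obtain rfl | rfl | rfl := zmod_three_cases i <;> rfl

theorem q_psi2 (f : Tuple) (i : ZMod 3) : (psi2 f).q (-i) = f.q i := by
  obtain rfl | rfl | rfl := zmod_three_cases i <;> rfl

theorem flip_mem_vtx {f : Tuple} (h : CondI f) (v : ZMod 3 × ℤ) : flip f v ∈ Vtx (psi2 f) := by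
  have := emod_mem_vtx (condI_psi2 h) (-v.1) (v.2 - f.h v.1)
  rwa [twol_psi2] at this

theorem flip_rho (f : Tuple) (v : ZMod 3 × ℤ) : flip f (rho f v) = rho (psi2 f) (flip f v) := by
  simp only [flip, rho, q_psi2, twol_psi2, Int.emod_add_emod, Int.emod_sub_emod]
  congr 2
  ring

theorem flip_iota2 {f : Tuple} (h : CondI f) {v : ZMod 3 × ℤ} (hv : v ∈ Vtx f) :
    flip f (iota2 f v) = iota2 (psi2 f) (flip f v) := by
  obtain ⟨i, j⟩ := v
  obtain ⟨h₁, h₂⟩ := hv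
  have hl : f.twol i = f.h (i - 1) + f.h i := rfl
  have hs := h (i - 1)
  have hs' := h i
  simp only at h₁ h₂
  by_cases hj : j < f.h i
  · have e : (j - f.h i) % f.twol i = j - f.h i + f.twol i := by
      rw [← Int.add_emod_right, Int.emod_eq_of_lt] <;> omega
    have e' : -i - 1 = -(i + 1) := by ring
    simp only [iota2, flip, hj, if_true, h_psi2, twol_psi2, e, e', Int.emod_sub_emod]
    rw [if_neg (by omega), Prod.mk.injEq]
    refine ⟨rfl, ?_⟩
    have : f.twol (i + 1) = f.h i + f.h (i + 1) := by simp [Tuple.twol]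
    rw [this, ← Int.add_emod_right]
    congr 1
    ring
  · have e : (j - f.h i) % f.twol i = j - f.h i := by
      rw [Int.emod_eq_of_lt] <;> omega
    have e' : -i + 1 = -(i - 1) := by ring
    simp only [iota2, flip, hj, if_false, h_psi2, twol_psi2, e, e', Int.emod_sub_emod]
    rw [if_pos (by omega), Prod.mk.injEq]
    refine ⟨rfl, ?_⟩
    congr 1
    omega

theorem flip_flip {f : Tuple} {v : ZMod 3 × ℤ} (hv : v ∈ Vtx f) :
    flip (psi2 f) (flip f v) = v := by
  obtain ⟨i, j⟩ := v
  simp only [flip, h_psi2, twol_psi2, neg_neg, Int.emod_sub_emod]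
  have hl : f.twol i = f.h (i - 1) + f.h i := rfl
  have : j - f.h i - f.h (i - 1) = j - f.twol i := by omega
  rw [this, Int.sub_emod_right, Int.emod_eq_of_lt hv.1 hv.2]

theorem orbRel_flip {f : Tuple} (h : CondI f) {v w : ZMod 3 × ℤ} (hvw : OrbRel f {2, 3} v w) :
    OrbRel (psi2 f) {2, 3} (flip f v) (flip f w) := by
  refine orbRel_map h (flip f) (fun v hv => ?_) (fun v hv => ?_) hvw
  · rw [flip_iota2 h hv]
    exact orbRel_iota2 (condI_psi2 h) (flip_mem_vtx h v)
  · rw [flip_rho, flip_rho, flip_iota2 h hv]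
    exact orbRel_rho_iota2 (condI_psi2 h) (flip_mem_vtx h v)

theorem threeOrbits_psi2 {f : Tuple} (h : CondI f) (hf : ThreeOrbits f {2, 3}) :
    ThreeOrbits (psi2 f) {2, 3} := by
  refine threeOrbits_transfer (flip f) (flip (psi2 f)) (fun v w => orbRel_flip h)
    (fun v w => orbRel_flip (condI_psi2 h)) (fun v _ => flip_mem_vtx h v)
    (fun v _ => flip_mem_vtx (condI_psi2 h) v) (fun v hv => ?_) (fun v hv => ?_) hf
  · rw [flip_flip hv]
    exact .refl _
  · have e : flip f (flip (psi2 f) v) = v := flip_flip hv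
    rw [e]
    exact .refl _

/-- Conditions (I)–(V) spelled out on the entries. -/
theorem conds_iff (f : Tuple) : CondsI_IV f ∧ CondV f ↔
    (0 < f.h0 ∧ 0 < f.h1 ∧ 0 < f.h2) ∧ (f.h0 % 2 = f.h1 % 2 ∧ f.h0 % 2 = f.h2 % 2) ∧
    (0 ≤ f.q0 ∧ f.q0 < f.h2 + f.h0 ∧ 0 ≤ f.q1 ∧ f.q1 < f.h0 + f.h1 ∧
      0 ≤ f.q2 ∧ f.q2 < f.h1 + f.h2) ∧
    (f.q0 % 2 = f.q1 % 2 ∧ f.q0 % 2 = f.q2 % 2) ∧ (f.h0 + f.q0) % 2 = 1 := by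
  constructor
  · rintro ⟨⟨hI, hII, hIII, hIV⟩, hV⟩
    exact ⟨⟨hI 0, hI 1, hI 2⟩, ⟨hII 0 1, hII 0 2⟩, ⟨(hIII 0).1, (hIII 0).2, (hIII 1).1,
      (hIII 1).2, (hIII 2).1, (hIII 2).2⟩, ⟨hIV 0 1, hIV 0 2⟩, hV 0⟩
  · rintro ⟨⟨h0, h1, h2⟩, ⟨p1, p2⟩, ⟨q0, q0', q1, q1', q2, q2'⟩, ⟨r1, r2⟩, hv⟩
    have key : ∀ {p : ZMod 3 → Prop}, p 0 → p 1 → p 2 → ∀ i, p i := by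
      intro p a b c i
      obtain rfl | rfl | rfl := zmod_three_cases i <;> assumption
    have hh : ∀ i, f.h i % 2 = f.h0 % 2 := key rfl p1.symm p2.symm
    have hq : ∀ i, f.q i % 2 = f.q0 % 2 := key rfl r1.symm r2.symm
    refine ⟨⟨key h0 h1 h2, fun i j => (hh i).trans (hh j).symm, key ⟨q0, q0'⟩ ⟨q1, q1'⟩ ⟨q2, q2'⟩,
      fun i j => (hq i).trans (hq j).symm⟩, fun i => ?_⟩
    have := hh i
    have := hq i
    omega

theorem admissible_psi2 {f : Tuple} (h : Admissible f) : Admissible (psi2 f) := by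
  have hc := (conds_iff f).1 ⟨h.1, h.2.1⟩
  have : CondsI_IV (psi2 f) ∧ CondV (psi2 f) := by
    rw [conds_iff]
    simp only [psi2]
    omega
  exact ⟨this.1, this.2, threeOrbits_psi2 h.1.1 h.2.2⟩

/-- The tuple `(r,r,s;a,0,b)`. -/
abbrev trapTuple (r s a b : ℤ) : Tuple := ⟨r, r, s, a, 0, b⟩

/-- A vertex on the third cycle, parametrised backwards by an arbitrary integer. -/
def backVtx (n j : ℤ) : ZMod 3 × ℤ := (2, (-1 - j) % n)

/-- A vertex on the first cycle, parametrised by an arbitrary integer. -/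
def foreVtx (n j : ℤ) : ZMod 3 × ℤ := (0, j % n)

theorem backVtx_congr {n i j : ℤ} (h : n ∣ i - j) : backVtx n i = backVtx n j := by
  simp only [backVtx, Prod.mk.injEq, true_and]
  apply Int.emod_eq_emod_iff_emod_sub_eq_zero.2
  apply Int.emod_eq_zero_of_dvd
  have : -1 - i - (-1 - j) = -(i - j) := by ring
  rw [this]
  exact h.neg_right

theorem foreVtx_congr {n i j : ℤ} (h : n ∣ i - j) : foreVtx n i = foreVtx n j := by
  simp only [foreVtx, Prod.mk.injEq, true_and]
  exact Int.emod_eq_emod_iff_emod_sub_eq_zero.2 (Int.emod_eq_zero_of_dvd h)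

section TrapTuple

variable {r s a b : ℤ}

theorem condI_trapTuple (hr : 0 < r) (hs : 0 < s) : CondI (trapTuple r s a b) := by
  intro i
  obtain rfl | rfl | rfl := zmod_three_cases i
  · exact hr
  · exact hr
  · exact hs

theorem mem_vtx_zero {x : ℤ} : ((0 : ZMod 3), x) ∈ Vtx (trapTuple r s a b) ↔ 0 ≤ x ∧ x < s + r :=
  Iff.rfl

theorem mem_vtx_one {x : ℤ} : ((1 : ZMod 3), x) ∈ Vtx (trapTuple r s a b) ↔ 0 ≤ x ∧ x < r + r :=
  Iff.rfl

theorem mem_vtx_two {x : ℤ} : ((2 : ZMod 3), x) ∈ Vtx (trapTuple r s a b) ↔ 0 ≤ x ∧ x < r + s :=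
  Iff.rfl

theorem backVtx_mem (hr : 0 < r) (hs : 0 < s) (j : ℤ) :
    backVtx (r + s) j ∈ Vtx (trapTuple r s a b) :=
  emod_mem_vtx (condI_trapTuple hr hs) 2 _

theorem iota2_zero_of_lt {j : ℤ} (h₀ : 0 ≤ j) (h : j < r) :
    iota2 (trapTuple r s a b) (0, j) = (1, 2 * r - 1 - j) := by
  rw [iota2_zero, if_pos h]
  simp only [Prod.mk.injEq, true_and]
  rw [← Int.add_emod_right, Int.emod_eq_of_lt] <;> omega

theorem iota2_one_of_lt {j : ℤ} (h₀ : 0 ≤ j) (h : j < r) (hs : 0 < s) :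
    iota2 (trapTuple r s a b) (1, j) = (2, r + s - 1 - j) := by
  rw [iota2_one, if_pos h]
  simp only [Prod.mk.injEq, true_and]
  rw [← Int.add_emod_right, Int.emod_eq_of_lt] <;> omega

theorem iota2_zero_of_ge {j : ℤ} (h₀ : r ≤ j) (h : j < r + s) (hr : 0 < r) :
    iota2 (trapTuple r s a b) (0, j) = (2, r + s - 1 - j) := by
  rw [iota2_zero, if_neg (by simpa using h₀)]
  simp only [Prod.mk.injEq, true_and]
  rw [Int.emod_eq_of_lt] <;> omega

theorem iota2_two_of_lt {j : ℤ} (h₀ : 0 ≤ j) (h : j < s) (hr : 0 < r) :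
    iota2 (trapTuple r s a b) (2, j) = (0, r + s - 1 - j) := by
  rw [iota2_two, if_pos h]
  simp only [Prod.mk.injEq, true_and]
  rw [← Int.add_emod_right, Int.emod_eq_of_lt] <;> omega

theorem iota2_two_of_ge {j : ℤ} (h₀ : s ≤ j) (h : j < r + s) :
    iota2 (trapTuple r s a b) (2, j) = (1, r + s - 1 - j) := by
  rw [iota2_two, if_neg (by simpa using h₀)]
  simp only [Prod.mk.injEq, true_and]
  rw [Int.emod_eq_of_lt] <;> omega

theorem iota2_one_of_ge {j : ℤ} (h₀ : r ≤ j) (h : j < 2 * r) (hs : 0 < s) :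
    iota2 (trapTuple r s a b) (1, j) = (0, 2 * r - 1 - j) := by
  rw [iota2_one, if_neg (by simpa using h₀)]
  simp only [Prod.mk.injEq, true_and]
  rw [Int.emod_eq_of_lt] <;> omega

/-- A relation holding along the three families of `ι₂`-edges holds along all of them. -/
theorem forall_iota2_edge {Q : ZMod 3 × ℤ → ZMod 3 × ℤ → Prop} (hr : 0 < r) (hs : 0 < s)
    (hsymm : ∀ v w, Q v w → Q w v)
    (h01 : ∀ j, 0 ≤ j → j < r → Q (0, j) (1, 2 * r - 1 - j))
    (h12 : ∀ j, 0 ≤ j → j < r → Q (1, j) (2, r + s - 1 - j))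
    (h02 : ∀ j, r ≤ j → j < r + s → Q (0, j) (2, r + s - 1 - j)) :
    ∀ v ∈ Vtx (trapTuple r s a b), Q v (iota2 (trapTuple r s a b) v) := by
  rintro ⟨i, j⟩ hv
  obtain rfl | rfl | rfl := zmod_three_cases i
  · obtain ⟨h₁, h₂⟩ := mem_vtx_zero.1 hv
    by_cases hj : j < r
    · rw [iota2_zero_of_lt h₁ hj]
      exact h01 j h₁ hj
    · rw [iota2_zero_of_ge (by omega) (by omega) hr]
      exact h02 j (by omega) (by omega)
  · obtain ⟨h₁, h₂⟩ := mem_vtx_one.1 hv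
    by_cases hj : j < r
    · rw [iota2_one_of_lt h₁ hj hs]
      exact h12 j h₁ hj
    · rw [iota2_one_of_ge (by omega) (by omega) hs]
      have := hsymm _ _ (h01 (2 * r - 1 - j) (by omega) (by omega))
      rwa [sub_sub_cancel] at this
  · obtain ⟨h₁, h₂⟩ := mem_vtx_two.1 hv
    by_cases hj : j < s
    · rw [iota2_two_of_lt h₁ hj hr]
      have := hsymm _ _ (h02 (r + s - 1 - j) (by omega) (by omega))
      rwa [sub_sub_cancel] at this
    · rw [iota2_two_of_ge (by omega) (by omega)]
      have := hsymm _ _ (h12 (r + s - 1 - j) (by omega) (by omega))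
      rwa [sub_sub_cancel] at this

theorem rho_trapTuple_one {j : ℤ} (h₀ : 0 ≤ j) (h : j < 2 * r) :
    rho (trapTuple r s a b) (1, j) = (1, j) := by
  rw [rho_one]
  simp only [Prod.mk.injEq, true_and]
  rw [Int.emod_eq_of_lt] <;> omega

theorem rho_trapTuple_zero (j : ℤ) :
    rho (trapTuple r s a b) (0, j) = foreVtx (r + s) (j + a) := by
  rw [rho_zero, foreVtx, add_comm s r]

theorem rho_trapTuple_two (j : ℤ) :
    rho (trapTuple r s a b) (2, r + s - 1 - j) = backVtx (r + s) (j - b) := by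
  rw [rho_two, backVtx]
  simp only [Prod.mk.injEq, true_and]
  rw [← Int.add_emod_right (-1 - (j - b))]
  congr 1
  ring

theorem foreVtx_of_mem {n j : ℤ} (h₀ : 0 ≤ j) (h : j < n) : foreVtx n j = (0, j) := by
  rw [foreVtx, Int.emod_eq_of_lt h₀ h]

theorem backVtx_of_mem {n j : ℤ} (h₀ : 0 ≤ j) (h : j < n) : backVtx n j = (2, n - 1 - j) := by
  rw [backVtx, ← Int.add_emod_right, Int.emod_eq_of_lt] <;> first | omega | skip
  simp only [Prod.mk.injEq, true_and]
  ring

theorem orbRel_fore_fore (hr : 0 < r) (hs : 0 < s) {j : ℤ} (h₀ : 0 ≤ j) (h : j < r) :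
    OrbRel (trapTuple r s a b) {2, 3} (foreVtx (r + s) j) (foreVtx (r + s) (j + a)) := by
  have hI : CondI (trapTuple r s a b) := condI_trapTuple hr hs
  have hv : ((0 : ZMod 3), j) ∈ Vtx (trapTuple r s a b) := mem_vtx_zero.2 (by omega)
  have e₂ := orbRel_iota2 hI hv
  have e₃ := orbRel_rho_iota2 hI hv
  rw [iota2_zero_of_lt h₀ h] at e₂ e₃
  rw [rho_trapTuple_one (by omega) (by omega), rho_trapTuple_zero] at e₃
  rw [foreVtx_of_mem h₀ (by omega)]
  exact e₂.trans _ _ _ e₃.symm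

theorem orbRel_back_back (hr : 0 < r) (hs : 0 < s) {j : ℤ} (h₀ : 0 ≤ j) (h : j < r) :
    OrbRel (trapTuple r s a b) {2, 3} (backVtx (r + s) j) (backVtx (r + s) (j - b)) := by
  have hI : CondI (trapTuple r s a b) := condI_trapTuple hr hs
  have hv : ((1 : ZMod 3), j) ∈ Vtx (trapTuple r s a b) := mem_vtx_one.2 (by omega)
  have e₂ := orbRel_iota2 hI hv
  have e₃ := orbRel_rho_iota2 hI hv
  rw [iota2_one_of_lt h₀ h hs] at e₂ e₃
  rw [rho_trapTuple_one (by omega) (by omega), rho_trapTuple_two] at e₃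
  rw [backVtx_of_mem h₀ (by omega)]
  exact e₂.symm.trans _ _ _ e₃

theorem orbRel_fore_back (hr : 0 < r) (hs : 0 < s) {j : ℤ} (h₀ : r ≤ j) (h : j < r + s) :
    OrbRel (trapTuple r s a b) {2, 3} (foreVtx (r + s) j) (backVtx (r + s) j) := by
  have e₂ := orbRel_iota2 (condI_trapTuple (a := a) (b := b) hr hs)
    (mem_vtx_zero.2 ⟨by omega, by omega⟩ : ((0 : ZMod 3), j) ∈ _)
  rw [iota2_zero_of_ge h₀ h hr] at e₂
  rwa [foreVtx_of_mem (by omega) h, backVtx_of_mem (by omega) h]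

theorem orbRel_fore_back_shift (hr : 0 < r) (hs : 0 < s) {j : ℤ} (h₀ : r ≤ j) (h : j < r + s) :
    OrbRel (trapTuple r s a b) {2, 3} (foreVtx (r + s) (j + a)) (backVtx (r + s) (j - b)) := by
  have e₃ := orbRel_rho_iota2 (condI_trapTuple (a := a) (b := b) hr hs)
    (mem_vtx_zero.2 ⟨by omega, by omega⟩ : ((0 : ZMod 3), j) ∈ _)
  rwa [iota2_zero_of_ge h₀ h hr, rho_trapTuple_zero, rho_trapTuple_two] at e₃

/-- The parameter `t` for which `backVtx (r + s) t` represents the orbit of a vertex. -/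
def repr (r a : ℤ) (v : ZMod 3 × ℤ) : ℤ :=
  if v.1 = 0 then (if v.2 < r then v.2 + a else v.2)
  else if v.1 = 1 then (if v.2 < r then v.2 else 2 * r - 1 - v.2 + a)
  else -1 - v.2

theorem repr_zero_of_lt {x : ℤ} (h : x < r) : repr r a (0, x) = x + a := by
  simp [repr, h]

theorem repr_zero_of_ge {x : ℤ} (h : r ≤ x) : repr r a (0, x) = x := by
  simp [repr, h]

theorem repr_one_of_lt {x : ℤ} (h : x < r) : repr r a (1, x) = x := by
  simp [repr, h]

theorem repr_one_of_ge {x : ℤ} (h : r ≤ x) : repr r a (1, x) = 2 * r - 1 - x + a := by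
  simp [repr, h]

theorem repr_two (x : ℤ) : repr r a (2, x) = -1 - x := by
  have h₀ : (2 : ZMod 3) ≠ 0 := by decide
  have h₁ : (2 : ZMod 3) ≠ 1 := by decide
  simp [repr, h₀, h₁]

theorem orbRel_repr (hr : 0 < r) (ha : r < a) (has : a < s) {v : ZMod 3 × ℤ}
    (hv : v ∈ Vtx (trapTuple r s a b)) :
    OrbRel (trapTuple r s a b) {2, 3} v (backVtx (r + s) (repr r a v)) := by
  have hs : 0 < s := by omega
  have hI : CondI (trapTuple r s a b) := condI_trapTuple hr hs
  have zero : ∀ x, 0 ≤ x → x < r →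
      OrbRel (trapTuple r s a b) {2, 3} (0, x) (backVtx (r + s) (x + a)) := by
    intro x h₀ h
    have := orbRel_fore_fore (a := a) (b := b) hr hs h₀ h
    rw [foreVtx_of_mem h₀ (by omega)] at this
    exact this.trans _ _ _ (orbRel_fore_back hr hs (by omega) (by omega))
  obtain ⟨i, x⟩ := v
  obtain rfl | rfl | rfl := zmod_three_cases i
  · obtain ⟨h₁, h₂⟩ := mem_vtx_zero.1 hv
    by_cases hx : x < r
    · rw [repr_zero_of_lt hx]
      exact zero x h₁ hx
    · rw [repr_zero_of_ge (by omega)]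
      have := orbRel_fore_back (a := a) (b := b) hr hs (j := x) (by omega) (by omega)
      rwa [foreVtx_of_mem h₁ (by omega)] at this
  · obtain ⟨h₁, h₂⟩ := mem_vtx_one.1 hv
    have e := orbRel_iota2 hI hv
    by_cases hx : x < r
    · rw [repr_one_of_lt hx, backVtx_of_mem h₁ (by omega)]
      rwa [iota2_one_of_lt h₁ hx hs] at e
    · rw [repr_one_of_ge (by omega)]
      rw [iota2_one_of_ge (by omega) (by omega) hs] at e
      exact e.trans _ _ _ (zero _ (by omega) (by omega))
  · obtain ⟨h₁, h₂⟩ := mem_vtx_two.1 hv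
    rw [repr_two, backVtx, sub_sub_cancel, Int.emod_eq_of_lt h₁ h₂]
    exact .refl _

theorem dvd_repr_backVtx_sub (n j : ℤ) : n ∣ repr r a (backVtx n j) - j := by
  rw [backVtx, repr_two]
  have : -1 - (-1 - j) % n - j = (-1 - j) - (-1 - j) % n := by ring
  rw [this]
  exact Int.dvd_self_sub_emod

/-- The map on vertices realising `σ`: move to the third cycle and shift by `a`. -/
def slide (r s a : ℤ) (v : ZMod 3 × ℤ) : ZMod 3 × ℤ := backVtx (r + s) (repr r a v - a)

variable {a' b' : ℤ}

theorem slide_back (j : ℤ) : slide r s a (backVtx (r + s) j) = backVtx (r + s) (j - a) := by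
  refine backVtx_congr ?_
  have := dvd_repr_backVtx_sub (r := r) (a := a) (r + s) j
  rwa [sub_sub_sub_cancel_right]

theorem orbRel_slide (hr : 0 < r) (ha : r < a) (has : a < s)
    (haa : a + a' = r + s) (hbb : r + s ∣ b' - (2 * a + b)) {v w : ZMod 3 × ℤ}
    (hvw : OrbRel (trapTuple r s a b) {2, 3} v w) :
    OrbRel (trapTuple r s a' b') {2, 3} (slide r s a v) (slide r s a w) := by
  have hs : 0 < s := by omega
  obtain ⟨m, hm⟩ := hbb
  have dvd : ∀ {x : ℤ} (y : ℤ), x = (r + s) * y → r + s ∣ x := fun y h => ⟨y, h⟩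
  refine orbRel_map (condI_trapTuple hr hs) _
    (forall_iota2_edge (Q := fun v w => OrbRel (trapTuple r s a' b') {2, 3}
      (slide r s a v) (slide r s a w)) hr hs (fun v w h => h.symm) ?_ ?_ ?_)
    (forall_iota2_edge (Q := fun v w => OrbRel (trapTuple r s a' b') {2, 3}
      (slide r s a (rho (trapTuple r s a b) v)) (slide r s a (rho (trapTuple r s a b) w)))
      hr hs (fun v w h => h.symm) ?_ ?_ ?_) hvw
  · intro j h₀ h
    rw [slide, slide, repr_zero_of_lt h, repr_one_of_ge (by omega), sub_sub_cancel]
    exact .refl _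
  · intro j h₀ h
    rw [← backVtx_of_mem h₀ (by omega), slide_back, slide, repr_one_of_lt h]
    exact .refl _
  · intro j h₀ h
    rw [← backVtx_of_mem (by omega) h, slide_back, slide, repr_zero_of_ge h₀]
    exact .refl _
  · intro j h₀ h
    rw [rho_trapTuple_one (by omega) (by omega), rho_trapTuple_zero,
      foreVtx_of_mem (by omega) (by omega), slide, slide, repr_zero_of_ge (by omega),
      repr_one_of_ge (by omega), sub_sub_cancel]
    exact .refl _
  · intro j h₀ h
    rw [rho_trapTuple_one (by omega) (by omega), rho_trapTuple_two, slide_back, slide,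
      repr_one_of_lt h]
    have e₁ := orbRel_fore_fore (a := a') (b := b') hr hs h₀ h
    have e₂ := orbRel_fore_back (a := a') (b := b') hr hs (j := j + a') (by omega) (by omega)
    have e₃ := orbRel_fore_back_shift (a := a') (b := b') hr hs (j := j + a) (by omega) (by omega)
    rw [foreVtx_congr (dvd 1 (by linarith) : r + s ∣ (j + a + a') - j)] at e₃
    rw [backVtx_congr (dvd (-1) (by linarith) : r + s ∣ (j - a) - (j + a')),
      backVtx_congr (dvd m (by linarith) : r + s ∣ (j - b - a) - (j + a - b'))]
    exact (e₁.trans _ _ _ e₂).symm.trans _ _ _ e₃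
  · intro k h₀ h
    rw [rho_trapTuple_two, slide_back, rho_trapTuple_zero]
    obtain ⟨d, hd⟩ : r + s ∣ (k + a) - (k + a) % (r + s) := Int.dvd_self_sub_emod
    have hx₀ := Int.emod_nonneg (k + a) (by omega : r + s ≠ 0)
    have hx₁ := Int.emod_lt_of_pos (k + a) (by omega : 0 < r + s)
    rw [foreVtx, slide]
    generalize (k + a) % (r + s) = x at hd hx₀ hx₁ ⊢
    by_cases hx : x < r
    · rw [repr_zero_of_lt hx, add_sub_cancel_right]
      have e := orbRel_back_back (a := a') (b := b') hr hs hx₀ hx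
      rwa [backVtx_congr (dvd (- m - d) (by linarith) : r + s ∣ (x - b') - (k - b - a)) ] at e
    · rw [repr_zero_of_ge (by omega)]
      have e₁ := orbRel_fore_back (a := a') (b := b') hr hs h₀ h
      have e₂ := orbRel_fore_back_shift (a := a') (b := b') hr hs (j := x) (by omega) (by omega)
      rw [foreVtx_congr (dvd (1 - d) (by linarith) : r + s ∣ (x + a') - k),
        backVtx_congr (dvd (- m - d) (by linarith) : r + s ∣ (x - b') - (k - b - a))] at e₂
      rw [backVtx_congr (dvd (- d) (by linarith) : r + s ∣ (x - a) - k)]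
      exact e₁.symm.trans _ _ _ e₂

theorem orbRel_slide_slide (hr : 0 < r) (ha : r < a) (has : a < s) (haa : a + a' = r + s)
    {v : ZMod 3 × ℤ} (hv : v ∈ Vtx (trapTuple r s a b)) :
    OrbRel (trapTuple r s a b) {2, 3} v (slide r s a' (slide r s a v)) := by
  have e := orbRel_repr hr ha has hv
  rw [show slide r s a v = backVtx (r + s) (repr r a v - a) from rfl, slide_back]
  rwa [backVtx_congr (⟨-1, by linarith⟩ : r + s ∣ repr r a v - a - a' - repr r a v)]

theorem threeOrbits_slide (hr : 0 < r) (ha : r < a) (has : a < s)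
    (haa : a + a' = r + s) (hbb : r + s ∣ b' - (2 * a + b))
    (h : ThreeOrbits (trapTuple r s a b) {2, 3}) :
    ThreeOrbits (trapTuple r s a' b') {2, 3} := by
  have hs : 0 < s := by omega
  have hbb' : r + s ∣ b - (2 * a' + b') := by
    obtain ⟨m, hm⟩ := hbb
    exact ⟨- m - 2, by linarith⟩
  exact threeOrbits_transfer (slide r s a) (slide r s a')
    (fun v w => orbRel_slide hr ha has haa hbb)
    (fun v w => orbRel_slide hr (by omega) (by omega) (by omega) hbb')
    (fun v _ => backVtx_mem hr hs _) (fun v _ => backVtx_mem hr hs _)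
    (fun v hv => orbRel_slide_slide hr ha has haa hv)
    (fun v hv => orbRel_slide_slide hr (by omega) (by omega) (by omega) hv) h

theorem admissible_trapTuple_sigma (hr : 0 < r) (ha : r < a) (has : a < s)
    (h : Admissible (trapTuple r s a b)) :
    Admissible (trapTuple r s (r + s - a) ((2 * a + b) % (r + s))) := by
  have hc := (conds_iff _).1 ⟨h.1, h.2.1⟩
  have hd : r + s ∣ (2 * a + b) % (r + s) - (2 * a + b) :=
    (dvd_sub_comm).1 Int.dvd_self_sub_emod
  have h0 := Int.emod_nonneg (2 * a + b) (by omega : r + s ≠ 0)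
  have h1 := Int.emod_lt_of_pos (2 * a + b) (by omega : 0 < r + s)
  have : CondsI_IV (trapTuple r s (r + s - a) ((2 * a + b) % (r + s))) ∧
      CondV (trapTuple r s (r + s - a) ((2 * a + b) % (r + s))) := by
    rw [conds_iff]
    simp only [true_and] at hc ⊢
    have h2 : (2 * a + b) % (r + s) % 2 = 0 := by
      rw [Int.emod_emod_of_dvd _ (by omega)]
      omega
    omega
  exact ⟨this.1, this.2, threeOrbits_slide hr ha has (by omega) hd h.2.2⟩

end TrapTuple

/-- The residue condition defining traps, for a reduced pair `(a, b)`. -/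
def TrapPair (r s a b : ℤ) : Prop :=
  (0 ≤ a ∧ a < r + s) ∧ (0 ≤ b ∧ b < r + s) ∧
    ∀ k : ℕ, inT r s ((a + (k : ℤ) * (a + b)) % (r + s)) ∧
      inT r s ((b + (k : ℤ) * (a + b)) % (r + s))

section TrapPair

variable {r s a b : ℤ}

theorem inT_emod_neg (hr : 0 < r) {x : ℤ} (h : inT r s (x % (r + s))) :
    inT r s (-x % (r + s)) := by
  obtain ⟨y, hy⟩ : r + s ∣ x - x % (r + s) := Int.dvd_self_sub_emod
  have e : ∀ z, -x % (r + s) = (r + s - z - (r + s) * 1 - (x - z)) % (r + s) := by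
    intro z; congr 1; ring
  rw [e (x % (r + s)), hy, Int.sub_mul_emod_self_left, Int.sub_mul_emod_self_left]
  rcases h with h | ⟨h₁, h₂⟩
  · left
    rw [h, sub_zero, Int.emod_self]
  · right
    rw [Int.emod_eq_of_lt (by omega) (by omega)]
    omega

theorem inT_congr {x y : ℤ} (hxy : r + s ∣ x - y) (h : inT r s (x % (r + s))) :
    inT r s (y % (r + s)) := by
  rwa [Int.emod_eq_emod_iff_emod_sub_eq_zero.2 (Int.emod_eq_zero_of_dvd hxy)] at h

theorem TrapPair.swap (h : TrapPair r s a b) : TrapPair r s b a :=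
  ⟨h.2.1, h.1, fun k => by rw [add_comm b a]; exact (h.2.2 k).symm⟩

/-- The residue condition extends to all integer multiples. -/
theorem TrapPair.forall_int (hr : 0 < r) (hs : 0 < s) (h : TrapPair r s a b) (k : ℤ) :
    inT r s ((a + k * (a + b)) % (r + s)) ∧ inT r s ((b + k * (a + b)) % (r + s)) := by
  have hn : 0 < r + s := by omega
  obtain ⟨y, hy⟩ : r + s ∣ k - k % (r + s) := Int.dvd_self_sub_emod
  have hk := h.2.2 (k % (r + s)).toNat
  rw [Int.toNat_of_nonneg (Int.emod_nonneg _ hn.ne')] at hk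
  refine ⟨inT_congr ⟨-y * (a + b), ?_⟩ hk.1, inT_congr ⟨-y * (a + b), ?_⟩ hk.2⟩
  · linear_combination (-(a + b)) * hy
  · linear_combination (-(a + b)) * hy

theorem TrapPair.neg (hr : 0 < r) (hs : 0 < s) (h : TrapPair r s a b) :
    TrapPair r s (-a % (r + s)) (-b % (r + s)) := by
  have hn : 0 < r + s := by omega
  refine ⟨⟨Int.emod_nonneg _ hn.ne', Int.emod_lt_of_pos _ hn⟩,
    ⟨Int.emod_nonneg _ hn.ne', Int.emod_lt_of_pos _ hn⟩, fun k => ?_⟩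
  obtain ⟨x, hx⟩ : r + s ∣ -a - -a % (r + s) := Int.dvd_self_sub_emod
  obtain ⟨y, hy⟩ : r + s ∣ -b - -b % (r + s) := Int.dvd_self_sub_emod
  refine ⟨inT_congr ⟨x + k * (x + y), ?_⟩ (inT_emod_neg hr (h.2.2 k).1),
    inT_congr ⟨y + k * (x + y), ?_⟩ (inT_emod_neg hr (h.2.2 k).2)⟩
  · linear_combination hx + k * (hx + hy)
  · linear_combination hy + k * (hx + hy)

theorem TrapPair.sigma (hr : 0 < r) (ha : r < a) (has : a < s) (h : TrapPair r s a b) :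
    TrapPair r s (r + s - a) ((2 * a + b) % (r + s)) := by
  have hs : 0 < s := by omega
  have hn : 0 < r + s := by omega
  refine ⟨by omega, ⟨Int.emod_nonneg _ hn.ne', Int.emod_lt_of_pos _ hn⟩, fun k => ?_⟩
  obtain ⟨x, hx⟩ : r + s ∣ (2 * a + b) - (2 * a + b) % (r + s) := Int.dvd_self_sub_emod
  refine ⟨inT_congr ⟨-1 + k * (x - 1), ?_⟩ (inT_emod_neg hr (h.forall_int hr hs (-k)).1),
    inT_congr ⟨x + k * (x - 1), ?_⟩ (h.forall_int hr hs (k + 1)).1⟩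
  · linear_combination k * hx
  · linear_combination (1 + k) * hx

end TrapPair

/-- The shapes occurring in the `H`-orbit of a trap tuple. -/
def TrapShape (r s : ℤ) (f : Tuple) : Prop :=
  ∃ a b, TrapPair r s a b ∧ (f = ⟨r, r, s, a, 0, b⟩ ∨ f = ⟨r, s, r, 0, a, b⟩ ∨
    f = ⟨s, r, r, a, b, 0⟩)

section TrapShape

variable {r s : ℤ}

theorem TrapShape.psi1 {f : Tuple} (h : TrapShape r s f) : TrapShape r s (psi1 f) := by
  obtain ⟨a, b, hab, rfl | rfl | rfl⟩ := h
  · exact ⟨b, a, hab.swap, .inr (.inl rfl)⟩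
  · exact ⟨a, b, hab, .inr (.inr rfl)⟩
  · exact ⟨b, a, hab.swap, .inl rfl⟩

theorem TrapShape.psi2 {f : Tuple} (h : TrapShape r s f) : TrapShape r s (psi2 f) := by
  obtain ⟨a, b, hab, rfl | rfl | rfl⟩ := h
  · exact ⟨a, b, hab, .inr (.inr rfl)⟩
  · exact ⟨b, a, hab.swap, .inr (.inl rfl)⟩
  · exact ⟨a, b, hab, .inl rfl⟩

theorem TrapShape.psi3 (hr : 0 < r) (hs : 0 < s) {f : Tuple} (h : TrapShape r s f) :
    TrapShape r s (psi3 f) := by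
  obtain ⟨a, b, hab, rfl | rfl | rfl⟩ := h
  · exact ⟨_, _, hab.neg hr hs, .inl (by simp [GMN.psi3, add_comm])⟩
  · exact ⟨_, _, hab.neg hr hs, .inr (.inl (by simp [GMN.psi3, add_comm]))⟩
  · exact ⟨_, _, hab.neg hr hs, .inr (.inr (by simp [GMN.psi3, add_comm]))⟩

theorem neg_emod_neg_emod {x n : ℤ} (h₀ : 0 ≤ x) (h : x < n) : -(-x % n) % n = x := by
  obtain ⟨y, hy⟩ : n ∣ -x - -x % n := Int.dvd_self_sub_emod
  have e : -(-x % n) = x + n * y := by linarith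
  rw [e, Int.add_mul_emod_self_left, Int.emod_eq_of_lt h₀ h]

theorem psi3_psi3 {f : Tuple} (h : CondIII f) : psi3 (psi3 f) = f := by
  obtain ⟨h₀, h₀'⟩ := h 0
  obtain ⟨h₁, h₁'⟩ := h 1
  obtain ⟨h₂, h₂'⟩ := h 2
  have e₀ : -(-f.q0 % (f.h2 + f.h0)) % (f.h2 + f.h0) = f.q0 := neg_emod_neg_emod h₀ h₀'
  have e₁ : -(-f.q1 % (f.h0 + f.h1)) % (f.h0 + f.h1) = f.q1 := neg_emod_neg_emod h₁ h₁'
  have e₂ : -(-f.q2 % (f.h1 + f.h2)) % (f.h1 + f.h2) = f.q2 := neg_emod_neg_emod h₂ h₂'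
  simp only [psi3, e₀, e₁, e₂]

theorem trapShape_iff_of_hEquiv (hr : 0 < r) (hs : 0 < s) {f g : Tuple} (h : HEquiv f g) :
    TrapShape r s f ↔ TrapShape r s g := by
  induction h with
  | rel x y hxy =>
    obtain ⟨hx, -, rfl | rfl | rfl⟩ := hxy
    · exact ⟨fun h => h.psi1, fun h => h.psi1.psi1⟩
    · exact ⟨fun h => h.psi2, fun h => h.psi2⟩
    · refine ⟨fun h => h.psi3 hr hs, fun h => ?_⟩
      have := h.psi3 hr hs
      rwa [psi3_psi3 hx.1.2.2.1] at this
  | refl x => exact Iff.rfl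
  | symm x y _ ih => exact ih.symm
  | trans x y z _ _ ih₁ ih₂ => exact ih₁.trans ih₂

theorem TrapPair.isTrapOfType {a b : ℤ} (h : TrapPair r s a b)
    (hg : Admissible (trapTuple r s a b)) {f : Tuple} (hfg : HEquiv f (trapTuple r s a b)) :
    IsTrapOfType r s f :=
  ⟨_, hg, hfg, rfl, rfl, rfl, rfl, h.2.2⟩

theorem IsTrapOfType.trapShape (hr : 0 < r) (hs : 0 < s) {f : Tuple} (h : IsTrapOfType r s f) :
    TrapShape r s f := by
  obtain ⟨⟨h0, h1, h2, q0, q1, q2⟩, hg, hfg, e0, e1, e2, e3, hk⟩ := h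
  simp only at e0 e1 e2 e3 hk
  subst e0 e1 e2 e3
  have hc := (conds_iff _).1 ⟨hg.1, hg.2.1⟩
  simp only at hc
  exact (trapShape_iff_of_hEquiv hr hs hfg).2 ⟨q0, q2, ⟨by omega, by omega, hk⟩, .inl rfl⟩

theorem TrapPair.fst_mem {a b : ℤ} (h : TrapPair r s a b) : a = 0 ∨ r < a ∧ a < s := by
  have := (h.2.2 0).1
  rwa [Nat.cast_zero, zero_mul, add_zero, Int.emod_eq_of_lt h.1.1 h.1.2] at this

theorem sigma_of_q0_eq_zero {f : Tuple} (h : f.q0 = 0) : sigma f = f := if_pos h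

theorem sigma_trapTuple {a b : ℤ} (hr : 0 < r) (ha : r < a) (has : a < s) :
    sigma (trapTuple r s a b) = trapTuple r s (r + s - a) ((2 * a + b) % (r + s)) := by
  rw [sigma, if_neg (by simp only; omega), if_neg (by simp only; omega),
    if_neg (by simp only; omega), if_pos has]
  simp only [add_sub_cancel_left, add_sub_cancel_right, Int.zero_emod]
  rw [Int.emod_eq_of_lt (by omega) (by omega)]

theorem sigma_psi2_trapTuple {a b : ℤ} (hr : 0 < r) (ha : r < a) (has : a < s) :
    sigma (psi2 (trapTuple r s a b)) =
      psi2 (trapTuple r s (r + s - a) ((2 * a + b) % (r + s))) := by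
  simp only [psi2]
  rw [sigma, if_neg (by simp only; omega), if_neg (by simp only; omega),
    if_neg (by simp only; omega), if_neg (by simp only; omega)]
  simp only [add_sub_cancel_left, add_sub_cancel_right, Int.zero_emod]
  rw [Int.emod_eq_of_lt (by omega) (by omega), add_comm s r]

end TrapShape

/-- if `f` is a trap of type `(r,s)`, then so is `σ(f)`. -/
theorem stmt_13 (r s : ℤ) (hr : 0 < r) (hrs : r ≤ s) (f : Tuple)
    (hf : Admissible f) (ht : IsTrapOfType r s f) :
    IsTrapOfType r s (sigma f) := by
  have hs : 0 < s := by omega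
  obtain ⟨a, b, hab, rfl | rfl | rfl⟩ := ht.trapShape hr hs
  · rcases hab.fst_mem with rfl | ⟨ha, has⟩
    · rwa [sigma_of_q0_eq_zero rfl]
    · rw [sigma_trapTuple hr ha has]
      exact (hab.sigma hr ha has).isTrapOfType (admissible_trapTuple_sigma hr ha has hf) (.refl _)
  · rwa [sigma_of_q0_eq_zero rfl]
  · rcases hab.fst_mem with rfl | ⟨ha, has⟩
    · rwa [sigma_of_q0_eq_zero rfl]
    · have hg := admissible_trapTuple_sigma hr ha has (admissible_psi2 hf)
      change IsTrapOfType r s (sigma (psi2 (trapTuple r s a b)))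
      rw [sigma_psi2_trapTuple hr ha has]
      exact (hab.sigma hr ha has).isTrapOfType hg
        (.symm _ _ (.rel _ _ ⟨hg, admissible_psi2 hg, .inr (.inl rfl)⟩))

end GMN
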